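/- Let U be a finite-dimensional real vector space with inner product, and let T : U → U be a linear map satisfying T² = -Id which commutes with an irreducible orthogonal representation ρ of a finite group Γ on U. Then T is an isometry (⟨Tu, Tu'⟩ = ⟨u, u'⟩ for all u, u') and skew-adjoint (⟨u, Tu'⟩ = -⟨Tu, u'⟩). -/

import Mathlib

open scoped RealInnerProductSpace

/-- A linear map `T` with `T² = -Id` commuting with an irreducible orthogonal representation
of a finite group is an isometry and skew-adjoint. -/
theorem complex_structure_isometry_skewAdjoint
    {Γ U : Type*} [Group Γ] [Finite Γ]
    [NormedAddCommGroup U] [InnerProductSpace ℝ U] [FiniteDimensional ℝ U]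
    (ρ : Γ →* (U ≃ₗᵢ[ℝ] U))
    (hirr : ∀ W : Submodule ℝ U, (∀ (g : Γ), ∀ u ∈ W, ρ g u ∈ W) → W = ⊥ ∨ W = ⊤)
    (T : U →ₗ[ℝ] U) (hT2 : ∀ u, T (T u) = -u)
    (hcomm : ∀ (g : Γ) (u : U), T (ρ g u) = ρ g (T u)) :
    (∀ u u' : U, ⟪T u, T u'⟫ = ⟪u, u'⟫) ∧ (∀ u u' : U, ⟪u, T u'⟫ = -⟪T u, u'⟫) := by
  have key : ∀ u u' : U, ⟪T u, T u'⟫ = ⟪u, u'⟫ := by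
    rcases subsingleton_or_nontrivial U with hU | hU
    · intro u u'
      rw [Subsingleton.elim u 0, Subsingleton.elim u' 0]
      simp
    · have hS : (LinearMap.adjoint T ∘ₗ T).IsSymmetric := by
        intro x y
        simp [LinearMap.adjoint_inner_left, LinearMap.adjoint_inner_right]
      obtain ⟨v, hv⟩ := hS.hasEigenvalue_iSup_of_finiteDimensional.exists_hasEigenvector
      generalize (⨆ x : { x : U // x ≠ 0 }, _ : ℝ) = c at hv
      have hv0 : v ≠ 0 := hv.2
      have hvc : ∀ w, ⟪T v, T w⟫ = c * ⟪v, w⟫ := by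
        intro w
        have h := hv.apply_eq_smul
        have h2 := congrArg (fun x => ⟪x, w⟫) h
        simpa [LinearMap.adjoint_inner_left, real_inner_smul_left] using h2
      let W : Submodule ℝ U :=
        { carrier := {u | ∀ w, ⟪T u, T w⟫ = c * ⟪u, w⟫}
          add_mem' := by
            intro a b ha hb w
            rw [map_add, inner_add_left, inner_add_left, ha w, hb w]
            ring
          zero_mem' := by
            intro w
            simp
          smul_mem' := by
            intro r a ha w
            rw [map_smul, real_inner_smul_left, real_inner_smul_left, ha w]
            ring }
      have hW : ∀ (g : Γ), ∀ u ∈ W, ρ g u ∈ W := by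
        intro g u hu w
        obtain ⟨z, rfl⟩ := (ρ g).surjective w
        rw [hcomm, hcomm, LinearIsometryEquiv.inner_map_map, LinearIsometryEquiv.inner_map_map]
        exact hu z
      have htop : W = ⊤ := by
        rcases hirr W hW with h | h
        · exfalso
          have hvW : v ∈ W := hvc
          rw [h, Submodule.mem_bot] at hvW
          exact hv0 hvW
        · exact h
      have hall : ∀ u w, ⟪T u, T w⟫ = c * ⟪u, w⟫ := by
        intro u
        have hu : u ∈ W := by
          rw [htop]
          trivial
        exact hu
      have hpos : 0 < ⟪v, v⟫ := real_inner_self_pos.mpr hv0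
      have h1 := hall v v
      have h2 := hall (T v) (T v)
      rw [hT2, inner_neg_neg, h1] at h2
      have h3 : 0 ≤ ⟪T v, T v⟫ := real_inner_self_nonneg
      rw [h1] at h3
      have hc0 : 0 ≤ c := nonneg_of_mul_nonneg_left h3 hpos
      have hcc : (c - 1) * (c + 1) = 0 := by
        apply mul_right_cancel₀ hpos.ne'
        linarith
      have hc : c = 1 := by
        rcases mul_eq_zero.mp hcc with h | h <;> linarith
      intro u u'
      rw [hall, hc, one_mul]
  refine ⟨key, fun u u' => ?_⟩
  rw [← key u (T u'), hT2, inner_neg_right]
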